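/- Binary characterization of the digital region: in the binary setup, (k=1, D=0, Δ) ∈ ℛ_digital if and only if there exist u, q ∈ [0,1/2] such that β·(1 − h₂(u)) ≤ 1 − h₂(q) and Δ ≤ h₂(ε) + h₂(u) − h₂(ε⋆u) − [ β·h₂(u) − ( h₂(ζ) + h₂(q) − h₂(ζ⋆q) ) ]₊. -/

import Mathlib

open Finset

namespace SecureSC

/-- Shannon entropy (base 2) of a finitely supported distribution `q`. -/
noncomputable def entropy {γ : Type} [Fintype γ] (q : γ → ℝ) : ℝ :=
  -∑ c, q c * Real.logb 2 (q c)

open Classical in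
/-- Pushforward of a distribution along a map. -/
noncomputable def pushf {γ α : Type} [Fintype γ] (q : γ → ℝ) (f : γ → α) : α → ℝ :=
  fun a => ∑ c, if f c = a then q c else 0

/-- Entropy `H(f)` of the random variable `f` under the joint distribution `q`. -/
noncomputable def Hof {γ α : Type} [Fintype γ] [Fintype α] (q : γ → ℝ) (f : γ → α) : ℝ :=
  entropy (pushf q f)

/-- Conditional entropy `H(f | g)` under the joint distribution `q`. -/
noncomputable def condH {γ α β : Type} [Fintype γ] [Fintype α] [Fintype β]
    (q : γ → ℝ) (f : γ → α) (g : γ → β) : ℝ :=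
  Hof q (fun c => (f c, g c)) - Hof q g

/-- Mutual information `I(f ; g)` under the joint distribution `q`. -/
noncomputable def mutInf {γ α β : Type} [Fintype γ] [Fintype α] [Fintype β]
    (q : γ → ℝ) (f : γ → α) (g : γ → β) : ℝ :=
  Hof q f + Hof q g - Hof q (fun c => (f c, g c))

/-- Conditional mutual information `I(f ; g | h)` under the joint distribution `q`. -/
noncomputable def condMutInf {γ α β δ : Type} [Fintype γ] [Fintype α] [Fintype β] [Fintype δ]
    (q : γ → ℝ) (f : γ → α) (g : γ → β) (h : γ → δ) : ℝ :=
  condH q f h - condH q f (fun c => (g c, h c))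

/-- Expectation of `φ` under the distribution `q`. -/
noncomputable def expVal {γ : Type} [Fintype γ] (q : γ → ℝ) (φ : γ → ℝ) : ℝ :=
  ∑ c, q c * φ c

/-- `q` is a probability mass function. -/
def IsPMF {γ : Type} [Fintype γ] (q : γ → ℝ) : Prop :=
  (∀ c, 0 ≤ q c) ∧ ∑ c, q c = 1

/-- `W` is a transition probability (stochastic kernel). -/
def IsKernel {α β : Type} [Fintype β] (W : α → β → ℝ) : Prop :=
  ∀ a, IsPMF (W a)

variable {A B E X Y Z : Type} [Fintype A] [Fintype B] [Fintype E]
  [Fintype X] [Fintype Y] [Fintype Z]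

/-- Component-wise mean distortion on sequences. -/
noncomputable def seqDist (d : A → A → ℝ) {n : ℕ} (a a' : Fin n → A) : ℝ :=
  (n : ℝ)⁻¹ * ∑ i, d (a i) (a' i)

/-- Joint distribution of `(Aⁿ, Bⁿ, Eⁿ, Xᵐ, Yᵐ, Zᵐ)` induced by the i.i.d. source `pS`,
the stochastic encoder `F` and the memoryless channel `Wch`. -/
noncomputable def codeJoint (pS : A × B × E → ℝ) (Wch : X → Y × Z → ℝ) {n m : ℕ}
    (F : (Fin n → A) → (Fin m → X) → ℝ) :
    (Fin n → A) × (Fin n → B) × (Fin n → E) × (Fin m → X) × (Fin m → Y) × (Fin m → Z) → ℝ :=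
  fun w =>
    (∏ i, pS (w.1 i, w.2.1 i, w.2.2.1 i)) * F w.1 w.2.2.2.1 *
      ∏ j, Wch (w.2.2.2.1 j) (w.2.2.2.2.1 j, w.2.2.2.2.2 j)

/-- A tuple `(k, D, Δ)` is achievable for the secure joint source-channel coding problem. -/
def Achievable (pS : A × B × E → ℝ) (Wch : X → Y × Z → ℝ) (d : A → A → ℝ)
    (k D Δ : ℝ) : Prop :=
  ∀ ε : ℝ, 0 < ε →
    ∃ (n m : ℕ), 0 < n ∧
      ∃ (F : (Fin n → A) → (Fin m → X) → ℝ)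
        (g : (Fin n → B) → (Fin m → Y) → Fin n → A),
        IsKernel F ∧
        (m : ℝ) / n ≤ k + ε ∧
        expVal (codeJoint pS Wch F)
          (fun w => seqDist d w.1 (g w.2.1 w.2.2.2.2.1)) ≤ D + ε ∧
        Δ - ε ≤ (n : ℝ)⁻¹ *
          condH (codeJoint pS Wch F) (fun w => w.1)
            (fun w => (w.2.2.1, w.2.2.2.2.2))

/-- Joint distribution of `(U, V, A, B, E)` with factorization `p(u|v) p(v|a) p(a,b,e)`. -/
noncomputable def sourceJointChain {𝒰 𝒱 : Type} [Fintype 𝒰] [Fintype 𝒱]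
    (pS : A × B × E → ℝ) (pU : 𝒱 → 𝒰 → ℝ) (pV : A → 𝒱 → ℝ) : 𝒰 × 𝒱 × A × B × E → ℝ :=
  fun w => pU w.2.1 w.1 * pV w.2.2.1 w.2.1 * pS (w.2.2.1, w.2.2.2.1, w.2.2.2.2)

/-- Joint distribution of `(Q, T, X, Y, Z)` with factorization `p(q) p(t|q) p(x|t) p(y,z|x)`. -/
noncomputable def chanJointQT {𝒬 𝒯 : Type} [Fintype 𝒬] [Fintype 𝒯]
    (Wch : X → Y × Z → ℝ) (pQ : 𝒬 → ℝ) (pT : 𝒬 → 𝒯 → ℝ) (pXk : 𝒯 → X → ℝ) :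
    𝒬 × 𝒯 × X × Y × Z → ℝ :=
  fun w => pQ w.1 * pT w.1 w.2.1 * pXk w.2.1 w.2.2.1 * Wch w.2.2.1 (w.2.2.2.1, w.2.2.2.2)

/-- The single-letter conditions defining the digital inner bound `ℛ_digital` (Theorem 2),
for given auxiliary finite alphabets `𝒰, 𝒱, 𝒬, 𝒯`. -/
def DigitalCond (𝒰 𝒱 𝒬 𝒯 : Type) [Fintype 𝒰] [Fintype 𝒱] [Fintype 𝒬] [Fintype 𝒯]
    (pS : A × B × E → ℝ) (Wch : X → Y × Z → ℝ) (d : A → A → ℝ)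
    (k D Δ : ℝ) : Prop :=
  ∃ (pU : 𝒱 → 𝒰 → ℝ) (pV : A → 𝒱 → ℝ)
    (pQ : 𝒬 → ℝ) (pT : 𝒬 → 𝒯 → ℝ) (pXk : 𝒯 → X → ℝ) (Ahat : 𝒱 → B → A),
    IsKernel pU ∧ IsKernel pV ∧ IsPMF pQ ∧ IsKernel pT ∧ IsKernel pXk ∧
    -- I(U;A|B) ≤ k · I(Q;Y)
    condMutInf (sourceJointChain pS pU pV)
        (fun w => w.1) (fun w => w.2.2.1) (fun w => w.2.2.2.1)
      ≤ k * mutInf (chanJointQT Wch pQ pT pXk)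
        (fun w => w.1) (fun w => w.2.2.2.1) ∧
    -- I(V;A|B) ≤ k · I(T;Y)
    condMutInf (sourceJointChain pS pU pV)
        (fun w => w.2.1) (fun w => w.2.2.1) (fun w => w.2.2.2.1)
      ≤ k * mutInf (chanJointQT Wch pQ pT pXk)
        (fun w => w.2.1) (fun w => w.2.2.2.1) ∧
    -- D ≥ E[d(A, Â(V,B))]
    expVal (sourceJointChain pS pU pV)
        (fun w => d w.2.2.1 (Ahat w.2.1 w.2.2.2.1)) ≤ D ∧
    -- Δ ≤ H(A|U,E) − [ I(V;A|U,B) − k·(I(T;Y|Q) − I(T;Z|Q)) ]₊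
    Δ ≤ condH (sourceJointChain pS pU pV)
          (fun w => w.2.2.1) (fun w => (w.1, w.2.2.2.2))
        - max 0
          (condMutInf (sourceJointChain pS pU pV)
              (fun w => w.2.1) (fun w => w.2.2.1) (fun w => (w.1, w.2.2.2.1))
           - k * (condMutInf (chanJointQT Wch pQ pT pXk)
                    (fun w => w.2.1) (fun w => w.2.2.2.1) (fun w => w.1)
                  - condMutInf (chanJointQT Wch pQ pT pXk)
                    (fun w => w.2.1) (fun w => w.2.2.2.2) (fun w => w.1)))


/-- The binary entropy function `h₂` (note `Real.logb 2 0 = 0`, so `h₂ 0 = h₂ 1 = 0`). -/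
noncomputable def h2 (x : ℝ) : ℝ := -(x * Real.logb 2 x) - (1 - x) * Real.logb 2 (1 - x)

/-- Binary convolution `a ⋆ b = a(1−b) + (1−a)b`. -/
def bstar (a b : ℝ) : ℝ := a * (1 - b) + (1 - a) * b

/-- Binary source with BEC/BSC side informations: `A` is uniform on `{0,1}`, `B` is the
output of a BEC with erasure probability `β` (`none` is the erasure symbol) and input `A`,
and `E` is the output of a BSC with crossover probability `ε` and input `A`, the two
channels being conditionally independent given `A`. -/
noncomputable def binSource (β ε : ℝ) : Bool × Option Bool × Bool → ℝ :=
  fun w => (1 / 2 : ℝ) *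
    (if w.2.1 = none then β else if w.2.1 = some w.1 then 1 - β else 0) *
    (if w.2.2 = w.1 then 1 - ε else ε)

/-- Type-II wiretap channel: Bob receives `Y = X` noiselessly, Eve receives `Z`, the output
of a BSC with crossover probability `ζ` and input `X`. -/
noncomputable def wiretapII (ζ : ℝ) : Bool → Bool × Bool → ℝ :=
  fun x w => (if w.1 = x then 1 else 0) * (if w.2 = x then 1 - ζ else ζ)

/-- Hamming distortion on `{0,1}`. -/
noncomputable def hamming : Bool → Bool → ℝ := fun a a' => if a = a' then 0 else 1

/-!
Zero distortion forces `H(A | V, B) = 0`, and since the erasures act independently of everything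
but `A`, `H(A | V, B) = β H(A | V)` and likewise for every other quantity conditioned on `B`. The
defining inequalities of the region therefore only involve `H(A | U)`, `H(E | U)`, `H(Y | Q)` and
`H(Z | Q)`. Choosing `u` and `q` with `h₂(u) = H(A | U)` and `h₂(q) = H(Y | Q)`, Mrs. Gerber's lemma
gives `h₂(ε ⋆ u) ≤ H(E | U)` and `h₂(ζ ⋆ q) ≤ H(Z | Q)`, which is the converse. Conversely, `V = A`,
`U` the output of a binary symmetric channel fed with `A`, and `X = T` the output of one fed with a
uniform `Q`, turn all these bounds into equalities.

Mrs. Gerber's lemma says that `h₂(e ⋆ h₂⁻¹(·))` is convex. Its slope at `h₂(x)` is, up to the factor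
`1 - 2e`, a ratio `artanh((1 - 2e) t) / artanh t` with `t = 1 - 2x`, which is monotone in `t` by the
monotone form of l'Hôpital's rule; the supporting line at `u` then yields the inequality.
-/

section BinaryEntropy

lemma h2_eq_binEntropy_div_log_two (x : ℝ) : h2 x = Real.binEntropy x / Real.log 2 := by
  simp only [h2, Real.binEntropy, Real.logb, Real.log_inv]
  ring

@[simp] lemma h2_zero : h2 0 = 0 := by simp [h2]

@[simp] lemma h2_half : h2 (1 / 2) = 1 := by
  rw [h2_eq_binEntropy_div_log_two, one_div, Real.binEntropy_two_inv,
    div_self (Real.log_pos one_lt_two).ne']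

@[simp] lemma h2_one_sub (x : ℝ) : h2 (1 - x) = h2 x := by
  simp only [h2_eq_binEntropy_div_log_two, Real.binEntropy_one_sub]

lemma continuous_h2 : Continuous h2 := by
  simp only [funext h2_eq_binEntropy_div_log_two]
  fun_prop

lemma h2_le_one (x : ℝ) : h2 x ≤ 1 := by
  rw [h2_eq_binEntropy_div_log_two]
  exact (div_le_one (Real.log_pos one_lt_two)).2 Real.binEntropy_le_log_two

lemma h2_monotoneOn : MonotoneOn h2 (Set.Icc 0 (1 / 2)) := by
  intro x hx y hy hxy
  simp only [h2_eq_binEntropy_div_log_two]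
  rw [one_div] at hx hy
  exact div_le_div_of_nonneg_right (Real.binEntropy_strictMonoOn.monotoneOn hx hy hxy)
    (Real.log_pos one_lt_two).le

lemma bstar_comm (a b : ℝ) : bstar a b = bstar b a := by
  simp only [bstar]
  ring

@[simp] lemma bstar_zero_right (a : ℝ) : bstar a 0 = a := by simp [bstar]

@[simp] lemma bstar_half_right (a : ℝ) : bstar a (1 / 2) = 1 / 2 := by
  simp only [bstar]
  ring

lemma bstar_one_sub_right (a b : ℝ) : bstar a (1 - b) = 1 - bstar a b := by
  simp only [bstar]
  ring

lemma one_sub_two_mul_bstar (a b : ℝ) : 1 - 2 * bstar a b = (1 - 2 * a) * (1 - 2 * b) := by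
  simp only [bstar]
  ring

lemma bstar_mem_Icc_half {a b : ℝ} (ha : a ∈ Set.Icc (0 : ℝ) (1 / 2))
    (hb : b ∈ Set.Icc (0 : ℝ) (1 / 2)) : bstar a b ∈ Set.Icc b (1 / 2) := by
  simp only [bstar]
  exact ⟨by nlinarith [ha.1, hb.2], by nlinarith [ha.2, hb.2]⟩

lemma h2_le_h2_bstar {a b : ℝ} (ha : a ∈ Set.Icc (0 : ℝ) (1 / 2))
    (hb : b ∈ Set.Icc (0 : ℝ) (1 / 2)) : h2 b ≤ h2 (bstar a b) := by
  have hab := bstar_mem_Icc_half ha hb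
  exact h2_monotoneOn hb ⟨hb.1.trans hab.1, hab.2⟩ hab.1

end BinaryEntropy

section MrsGerber

-- The monotone form of l'Hôpital's rule: `f t / g t` is the mediant of the mean slopes over
-- `(a, s)` and `(s, t)`, both of which are values of `f' / g'`.
lemma antitoneOn_div_of_antitoneOn_deriv_div {f f' g g' : ℝ → ℝ} {a b : ℝ}
    (hf : ∀ x ∈ Set.Ico a b, HasDerivAt f (f' x) x)
    (hg : ∀ x ∈ Set.Ico a b, HasDerivAt g (g' x) x) (hfa : f a = 0) (hga : g a = 0)
    (hg' : ∀ x ∈ Set.Ico a b, 0 < g' x)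
    (hanti : AntitoneOn (fun x => f' x / g' x) (Set.Ioo a b)) :
    AntitoneOn (fun x => f x / g x) (Set.Ioo a b) := by
  have slope : ∀ x y, a ≤ x → x < y → y < b →
      ∃ c ∈ Set.Ioo x y, 0 < g y - g x ∧ f y - f x = f' c / g' c * (g y - g x) := by
    intro x y hax hxy hyb
    have hsub : Set.Icc x y ⊆ Set.Ico a b := fun z hz => ⟨hax.trans hz.1, hz.2.trans_lt hyb⟩
    have hsub' := Set.Ioo_subset_Icc_self.trans hsub
    have hgc := HasDerivAt.continuousOn fun z hz => hg z (hsub hz)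
    obtain ⟨c, hc, hfg⟩ := exists_ratio_hasDerivAt_eq_ratio_slope f f' hxy
      (HasDerivAt.continuousOn fun z hz => hf z (hsub hz)) (fun z hz => hf z (hsub' hz))
      g g' hgc fun z hz => hg z (hsub' hz)
    obtain ⟨d, hd, hgd⟩ := exists_hasDerivAt_eq_slope g g' hxy hgc fun z hz => hg z (hsub' hz)
    have hg_slope := hg' d (hsub' hd)
    rw [hgd, div_pos_iff_of_pos_right (sub_pos.2 hxy)] at hg_slope
    refine ⟨c, hc, hg_slope, ?_⟩
    field_simp [(hg' c (hsub' hc)).ne']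
    linarith
  intro s hs t ht hst
  rcases hst.eq_or_lt with rfl | hst
  · exact le_rfl
  obtain ⟨c, hc, hgs, hfs⟩ := slope a s le_rfl hs.1 hs.2
  obtain ⟨d, hd, hgt, hft⟩ := slope s t hs.1.le hst ht.2
  have hdc : f' d / g' d ≤ f' c / g' c :=
    hanti ⟨hc.1, hc.2.trans hs.2⟩ ⟨hs.1.trans hd.1, hd.2.trans ht.2⟩ (hc.2.trans hd.1).le
  rw [hfa, hga, sub_zero, sub_zero] at hfs
  rw [hga, sub_zero] at hgs
  simp only
  rw [div_le_iff₀ (hgs.trans (sub_pos.1 hgt)), hfs, mul_div_cancel_right₀ _ hgs.ne']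
  linarith [mul_le_mul_of_nonneg_right hdc hgt.le]

lemma hasDerivAt_artanh {x : ℝ} (hx : x ∈ Set.Ioo (-1 : ℝ) 1) :
    HasDerivAt Real.artanh (1 / (1 - x ^ 2)) x := by
  have h₁ : 0 < 1 + x := by linarith [hx.1]
  have h₂ : 0 < 1 - x := by linarith [hx.2]
  have hlog : HasDerivAt (fun y : ℝ => 1 / 2 * Real.log ((1 + y) / (1 - y)))
      (1 / 2 * ((1 * (1 - x) - (1 + x) * -1) / (1 - x) ^ 2 / ((1 + x) / (1 - x)))) x :=
    ((((hasDerivAt_id x).const_add 1).fun_div ((hasDerivAt_id x).const_sub 1) h₂.ne').log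
      (div_pos h₁ h₂).ne').const_mul _
  refine (hlog.congr_of_eventuallyEq ?_).congr_deriv ?_
  · filter_upwards [Ioo_mem_nhds hx.1 hx.2] with y hy
    exact Real.artanh_eq_half_log (Set.Ioo_subset_Icc_self hy)
  · rw [show 1 - x ^ 2 = (1 + x) * (1 - x) by ring]
    field_simp
    ring

lemma antitoneOn_artanh_mul_div_artanh {c : ℝ} (hc : c ∈ Set.Icc (0 : ℝ) 1) :
    AntitoneOn (fun t => Real.artanh (c * t) / Real.artanh t) (Set.Ioo 0 1) := by
  have hct : ∀ t ∈ Set.Ico (0 : ℝ) 1, c * t ∈ Set.Ico (0 : ℝ) 1 := fun t ht =>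
    ⟨mul_nonneg hc.1 ht.1, (mul_le_of_le_one_left ht.1 hc.2).trans_lt ht.2⟩
  have hsq : ∀ t ∈ Set.Ico (0 : ℝ) 1, 0 < 1 - t ^ 2 := fun t ht => by nlinarith [ht.1, ht.2]
  refine antitoneOn_div_of_antitoneOn_deriv_div (f' := fun t => 1 / (1 - (c * t) ^ 2) * c)
    (g' := fun t => 1 / (1 - t ^ 2)) (fun t ht => ?_) (fun t ht => ?_) (by simp) (by simp)
    (fun t ht => one_div_pos.2 (hsq t ht)) fun s hs t ht hst => ?_
  · exact (hasDerivAt_artanh ⟨by linarith [(hct t ht).1], (hct t ht).2⟩).comp t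
      (by simpa using (hasDerivAt_id t).const_mul c)
  · exact hasDerivAt_artanh ⟨by linarith [ht.1], ht.2⟩
  · have hs' := Set.Ioo_subset_Ico_self hs
    have ht' := Set.Ioo_subset_Ico_self ht
    have := hsq s hs'
    have := hsq t ht'
    have := hsq _ (hct s hs')
    have := hsq _ (hct t ht')
    have hst_sq : s ^ 2 ≤ t ^ 2 := pow_le_pow_left₀ hs.1.le hst 2
    have hc_sq : c ^ 2 ≤ 1 := pow_le_one₀ hc.1 hc.2
    simp only [one_div, div_inv_eq_mul]
    rw [mul_assoc, mul_assoc, inv_mul_eq_div, inv_mul_eq_div, div_le_div_iff₀ ‹_› ‹_›]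
    nlinarith [mul_nonneg hc.1 (mul_nonneg (sub_nonneg.2 hst_sq) (sub_nonneg.2 hc_sq))]

/-- The entropy, in nats, of a bit of bias `t = P(0) - P(1)`; in this parametrisation the binary
symmetric channel of crossover probability `e` is multiplication by `1 - 2 * e`. -/
noncomputable def biasEntropy (t : ℝ) : ℝ := Real.binEntropy ((1 - t) / 2)

lemma continuous_biasEntropy : Continuous biasEntropy := by
  unfold biasEntropy
  fun_prop

lemma h2_eq_biasEntropy_div_log_two (x : ℝ) : h2 x = biasEntropy (1 - 2 * x) / Real.log 2 := by
  rw [h2_eq_binEntropy_div_log_two, biasEntropy]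
  ring_nf

lemma hasDerivAt_biasEntropy {t : ℝ} (ht : t ∈ Set.Ioo (-1 : ℝ) 1) :
    HasDerivAt biasEntropy (-Real.artanh t) t := by
  have h₁ : 0 < 1 + t := by linarith [ht.1]
  have h₂ : 0 < 1 - t := by linarith [ht.2]
  have hlin : HasDerivAt (fun t : ℝ => (1 - t) / 2) (-1 / 2) t :=
    ((hasDerivAt_id t).const_sub 1).div_const 2
  refine ((Real.hasDerivAt_binEntropy (by linarith) (by linarith)).comp t hlin).congr_deriv ?_
  rw [show 1 - (1 - t) / 2 = (1 + t) / 2 by ring, Real.log_div h₁.ne' two_ne_zero,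
    Real.log_div h₂.ne' two_ne_zero, Real.artanh_eq_half_log (Set.Ioo_subset_Icc_self ht),
    Real.log_div h₁.ne' h₂.ne']
  ring

lemma isMinOn_biasEntropy_mul_sub {c t₀ : ℝ} (hc : c ∈ Set.Icc (0 : ℝ) 1)
    (ht₀ : t₀ ∈ Set.Ioo (0 : ℝ) 1) :
    IsMinOn (fun t => biasEntropy (c * t)
      - c * (Real.artanh (c * t₀) / Real.artanh t₀) * biasEntropy t) (Set.Icc 0 1) t₀ := by
  set r : ℝ → ℝ := fun t => Real.artanh (c * t) / Real.artanh t
  have hr : AntitoneOn r (Set.Ioo 0 1) := antitoneOn_artanh_mul_div_artanh hc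
  have hderiv : ∀ t ∈ Set.Ioo (0 : ℝ) 1,
      HasDerivAt (fun t => biasEntropy (c * t) - c * r t₀ * biasEntropy t)
        (c * Real.artanh t * (r t₀ - r t)) t := by
    intro t ht
    have hct : c * t ∈ Set.Ioo (-1 : ℝ) 1 :=
      ⟨by linarith [mul_nonneg hc.1 ht.1.le],
        (mul_le_of_le_one_left ht.1.le hc.2).trans_lt ht.2⟩
    have hlin : HasDerivAt (fun t : ℝ => c * t) c t := by
      simpa using (hasDerivAt_id t).const_mul c
    refine (((hasDerivAt_biasEntropy hct).comp t hlin).sub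
      ((hasDerivAt_biasEntropy ⟨by linarith [ht.1], ht.2⟩).const_mul (c * r t₀))).congr_deriv ?_
    have := (Real.artanh_pos ht).ne'
    simp only [r]
    field_simp
    ring
  have hcont : Continuous fun t => biasEntropy (c * t) - c * r t₀ * biasEntropy t :=
    (continuous_biasEntropy.comp (by fun_prop)).sub (continuous_biasEntropy.const_mul _)
  have hleft : Set.Ioo 0 t₀ ⊆ Set.Ioo (0 : ℝ) 1 := Set.Ioo_subset_Ioo_right ht₀.2.le
  have hright : Set.Ioo t₀ 1 ⊆ Set.Ioo (0 : ℝ) 1 := Set.Ioo_subset_Ioo_left ht₀.1.le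
  refine isMinOn_Icc_of_deriv hcont.continuousAt hcont.continuousAt hcont.continuousAt
    (fun t ht => (hderiv t (hleft ht)).differentiableAt.differentiableWithinAt)
    (fun t ht => (hderiv t (hright ht)).differentiableAt.differentiableWithinAt)
    (fun t ht => ?_) fun t ht => ?_
  · rw [(hderiv t (hleft ht)).deriv]
    exact mul_nonpos_of_nonneg_of_nonpos (mul_nonneg hc.1 (Real.artanh_pos (hleft ht)).le)
      (sub_nonpos.2 (hr (hleft ht) ht₀ ht.2.le))
  · rw [(hderiv t (hright ht)).deriv]
    exact mul_nonneg (mul_nonneg hc.1 (Real.artanh_pos (hright ht)).le)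
      (sub_nonneg.2 (hr ht₀ (hright ht) ht.1.le))

lemma exists_supporting_line_h2_bstar {e u : ℝ} (he : e ∈ Set.Icc (0 : ℝ) (1 / 2))
    (hu : u ∈ Set.Icc (0 : ℝ) (1 / 2)) :
    ∃ l : ℝ, ∀ x ∈ Set.Icc (0 : ℝ) 1,
      h2 (bstar e u) + l * (h2 x - h2 u) ≤ h2 (bstar e x) := by
  suffices ∃ l : ℝ, ∀ x ∈ Set.Icc (0 : ℝ) (1 / 2),
      h2 (bstar e u) + l * (h2 x - h2 u) ≤ h2 (bstar e x) by
    obtain ⟨l, hl⟩ := this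
    refine ⟨l, fun x hx => ?_⟩
    rcases le_total x (1 / 2) with hx' | hx'
    · exact hl x ⟨hx.1, hx'⟩
    · simpa only [bstar_one_sub_right, h2_one_sub]
        using hl (1 - x) ⟨by linarith [hx.2], by linarith⟩
  rcases hu.1.eq_or_lt with rfl | hu₀
  · refine ⟨0, fun x hx => ?_⟩
    simpa [bstar_comm e x] using h2_le_h2_bstar hx he
  rcases hu.2.eq_or_lt with rfl | hu₁
  · refine ⟨1, fun x hx => ?_⟩
    simpa only [bstar_half_right, h2_half, one_mul, add_sub_cancel] using h2_le_h2_bstar he hx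
  have hmin := isMinOn_biasEntropy_mul_sub (c := 1 - 2 * e) (t₀ := 1 - 2 * u)
    ⟨by linarith [he.2], by linarith [he.1]⟩ ⟨by linarith, by linarith⟩
  refine ⟨(1 - 2 * e) * (Real.artanh (1 - 2 * bstar e u) / Real.artanh (1 - 2 * u)),
    fun x hx => ?_⟩
  have hx_min := isMinOn_iff.1 hmin (1 - 2 * x) ⟨by linarith [hx.2], by linarith [hx.1]⟩
  simp only [← one_sub_two_mul_bstar] at hx_min
  have hlog := Real.log_pos one_lt_two
  simp only [h2_eq_biasEntropy_div_log_two]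
  rw [← sub_div, mul_div_assoc', ← add_div]
  refine div_le_div_of_nonneg_right ?_ hlog.le
  linear_combination hx_min

lemma h2_bstar_le_sum_of_h2_eq_sum {ι : Type*} [Fintype ι] {p x : ι → ℝ} {e u : ℝ}
    (he : e ∈ Set.Icc (0 : ℝ) (1 / 2)) (hu : u ∈ Set.Icc (0 : ℝ) (1 / 2))
    (hp : ∀ i, 0 ≤ p i) (hp_sum : ∑ i, p i = 1) (hx : ∀ i, x i ∈ Set.Icc (0 : ℝ) 1)
    (hux : h2 u = ∑ i, p i * h2 (x i)) :
    h2 (bstar e u) ≤ ∑ i, p i * h2 (bstar e (x i)) := by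
  obtain ⟨l, hl⟩ := exists_supporting_line_h2_bstar he hu
  calc h2 (bstar e u) = ∑ i, p i * (h2 (bstar e u) + l * (h2 (x i) - h2 u)) := by
        have : ∀ i, p i * (h2 (bstar e u) + l * (h2 (x i) - h2 u))
            = p i * (h2 (bstar e u) - l * h2 u) + l * (p i * h2 (x i)) := fun i => by ring
        simp only [this, sum_add_distrib, ← sum_mul, ← mul_sum, hp_sum, ← hux]
        ring
    _ ≤ ∑ i, p i * h2 (bstar e (x i)) :=
        sum_le_sum fun i _ => mul_le_mul_of_nonneg_left (hl _ (hx i)) (hp i)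

end MrsGerber

section Pushforward

variable {γ α β : Type} [Fintype γ] {q : γ → ℝ}

lemma expVal_pushf [Fintype α] (q : γ → ℝ) (f : γ → α) (φ : α → ℝ) :
    expVal (pushf q f) φ = expVal q fun c => φ (f c) := by
  classical
  simp only [expVal, pushf, sum_mul, ite_mul, zero_mul]
  rw [sum_comm]
  simp

lemma pushf_pushf [Fintype α] (q : γ → ℝ) (f : γ → α) (g : α → β) :
    pushf (pushf q f) g = pushf q fun c => g (f c) := by
  classical
  ext b
  simpa [expVal, pushf] using expVal_pushf q f fun a => if g a = b then 1 else 0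

lemma sum_pushf [Fintype α] (q : γ → ℝ) (f : γ → α) : ∑ a, pushf q f a = ∑ c, q c := by
  simpa [expVal] using expVal_pushf q f fun _ => 1

lemma sum_pushf_prodMk [Fintype β] (q : γ → ℝ) (f : γ → α) (g : γ → β) (a : α) :
    ∑ b, pushf q (fun c => (f c, g c)) (a, b) = pushf q f a := by
  classical
  simp only [pushf, Prod.mk.injEq, ite_and]
  rw [sum_comm]
  refine sum_congr rfl fun c _ => ?_
  split_ifs <;> simp

lemma pushf_nonneg (hq : ∀ c, 0 ≤ q c) (f : γ → α) (a : α) : 0 ≤ pushf q f a :=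
  sum_nonneg fun c _ => by split_ifs <;> simp [hq c]

lemma IsPMF.pushf [Fintype α] (hq : IsPMF q) (f : γ → α) : IsPMF (pushf q f) :=
  ⟨pushf_nonneg hq.1 f, (sum_pushf q f).trans hq.2⟩

lemma pushf_congr {f g : γ → α} (h : ∀ c, q c ≠ 0 → f c = g c) : pushf q f = pushf q g := by
  ext a
  refine sum_congr rfl fun c _ => ?_
  by_cases hc : q c = 0
  · simp [hc]
  · rw [h c hc]

lemma pushf_apply_of_injective {f : γ → α} (hf : f.Injective) (q : γ → ℝ) (c : γ) :
    pushf q f (f c) = q c := by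
  classical
  simp [pushf, hf.eq_iff]

lemma pushf_comp_apply_of_injective {φ : α → β} (hφ : φ.Injective) (q : γ → ℝ)
    (f : γ → α) (a : α) : pushf q (fun c => φ (f c)) (φ a) = pushf q f a := by
  classical
  simp only [pushf, hφ.eq_iff]

lemma pushf_prodMk_swap (q : γ → ℝ) (f : γ → α) (g : γ → β) (a : α) (b : β) :
    pushf q (fun c => (g c, f c)) (b, a) = pushf q (fun c => (f c, g c)) (a, b) :=
  pushf_comp_apply_of_injective Prod.swap_injective q (fun c => (f c, g c)) (a, b)

lemma pushf_eq_zero_of_notMem_range {f : γ → α} {a : α} (ha : a ∉ Set.range f) (q : γ → ℝ) :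
    pushf q f a = 0 :=
  sum_eq_zero fun c _ => if_neg fun hc => ha ⟨c, hc⟩

lemma pushf_prodMk_eq_pushf_indicator_right (q : γ → ℝ) (f : γ → α) (g : γ → β) (a : α) (b : β) :
    pushf q (fun c => (f c, g c)) (a, b) = pushf ((g ⁻¹' {b}).indicator q) f a := by
  classical
  simp only [pushf, Prod.mk.injEq, ite_and, Set.indicator_apply, Set.mem_preimage,
    Set.mem_singleton_iff]

lemma pushf_prodMk_eq_pushf_indicator_left (q : γ → ℝ) (f : γ → α) (g : γ → β) (a : α) (b : β) :
    pushf q (fun c => (f c, g c)) (a, b) = pushf ((f ⁻¹' {a}).indicator q) g b := by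
  rw [← pushf_prodMk_eq_pushf_indicator_right, pushf_prodMk_swap]

end Pushforward

section Entropy

variable {γ α β δ : Type} [Fintype γ] [Fintype α] [Fintype β] [Fintype δ] {q : γ → ℝ}

lemma entropy_eq_sum_negMulLog_div_log_two (p : α → ℝ) :
    entropy p = (∑ a, Real.negMulLog (p a)) / Real.log 2 := by
  simp only [entropy, Real.negMulLog, Real.logb, sum_div, ← sum_neg_distrib]
  exact sum_congr rfl fun a _ => by ring

lemma entropy_nonneg {p : α → ℝ} (hp : IsPMF p) : 0 ≤ entropy p := by
  rw [entropy_eq_sum_negMulLog_div_log_two]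
  refine div_nonneg (sum_nonneg fun a _ => Real.negMulLog_nonneg (hp.1 a) ?_)
    (Real.log_pos one_lt_two).le
  exact hp.2 ▸ single_le_sum (fun b _ => hp.1 b) (mem_univ a)

lemma Hof_comp_of_injective {φ : α → β} (hφ : φ.Injective) (q : γ → ℝ) (f : γ → α) :
    Hof q (fun c => φ (f c)) = Hof q f := by
  simp only [Hof, entropy_eq_sum_negMulLog_div_log_two]
  congr 1
  refine (Fintype.sum_of_injective φ hφ _ _ (fun b hb => ?_) fun a => ?_).symm
  · rw [← pushf_pushf, pushf_eq_zero_of_notMem_range hb, Real.negMulLog_zero]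
  · rw [pushf_comp_apply_of_injective hφ]

lemma Hof_swap (q : γ → ℝ) (f : γ → α) (g : γ → β) :
    Hof q (fun c => (g c, f c)) = Hof q fun c => (f c, g c) :=
  Hof_comp_of_injective Prod.swap_injective q fun c => (f c, g c)

lemma Hof_left_comm (q : γ → ℝ) (f : γ → α) (g : γ → β) (h : γ → δ) :
    Hof q (fun c => (g c, f c, h c)) = Hof q fun c => (f c, g c, h c) :=
  Hof_comp_of_injective (φ := fun w : α × β × δ => (w.2.1, w.1, w.2.2))
    (fun _ _ h => by simp_all [Prod.ext_iff]) q fun c => (f c, g c, h c)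

lemma Hof_const [Unique α] (hq : IsPMF q) (f : γ → α) : Hof q f = 0 := by
  have hp := (hq.pushf f).2
  rw [Fintype.sum_unique] at hp
  rw [Hof, entropy_eq_sum_negMulLog_div_log_two, Fintype.sum_unique, hp, Real.negMulLog_one,
    zero_div]

lemma condH_comp_right_of_injective {φ : β → δ} (hφ : φ.Injective) (q : γ → ℝ) (f : γ → α)
    (g : γ → β) : condH q f (fun c => φ (g c)) = condH q f g := by
  rw [condH, condH, Hof_comp_of_injective hφ, ← Hof_comp_of_injective
    (Function.injective_id.prodMap hφ) q fun c => (f c, g c)]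
  rfl

lemma condH_of_unique [Unique β] (hq : IsPMF q) (f : γ → α) (g : γ → β) :
    condH q f g = Hof q f := by
  rw [condH, Hof_const hq g, sub_zero, ← Hof_comp_of_injective
    (φ := fun a : α => (a, (default : β))) (fun _ _ h => (Prod.mk.inj h).1) q f]
  simp only [Unique.eq_default]

lemma condH_eq_zero {f : γ → α} {g : γ → β} (φ : β → α) (h : ∀ c, q c ≠ 0 → f c = φ (g c)) :
    condH q f g = 0 := by
  have hfg : pushf q (fun c => (f c, g c)) = pushf q fun c => (φ (g c), g c) :=
    pushf_congr fun c hc => by rw [h c hc]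
  rw [condH, Hof, hfg, sub_eq_zero]
  exact Hof_comp_of_injective (φ := fun b => (φ b, b)) (fun _ _ h => (Prod.mk.inj h).2) q g

lemma condH_prodMk_right (q : γ → ℝ) (f : γ → α) (g : γ → β) (h : γ → δ) :
    condH q f (fun c => (g c, h c))
      = condH q f h + condH q g (fun c => (f c, h c)) - condH q g h := by
  simp only [condH, Hof_left_comm q f g h]
  ring

lemma mutInf_eq_Hof_sub_condH (q : γ → ℝ) (f : γ → α) (g : γ → β) :
    mutInf q f g = Hof q g - condH q g f := by
  rw [mutInf, condH, Hof_swap]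
  ring

lemma condMutInf_comm (q : γ → ℝ) (f : γ → α) (g : γ → β) (h : γ → δ) :
    condMutInf q f g h = condMutInf q g f h := by
  simp only [condMutInf, condH, Hof_left_comm q f g h]
  ring

end Entropy

section ConditionalLaw

variable {γ α β δ : Type} [Fintype γ] {q : γ → ℝ}

/-- The kernel `k` is a version of the conditional law of the random variable `g` given `f` under
`q`. Taking `f` to be a pair `(x, h)` and `k` to depend on `x` only, this says that `g` is the
output of the channel `k` with input `x`, and is conditionally independent of `h` given `x`. -/
def IsCondLaw (q : γ → ℝ) (f : γ → α) (g : γ → β) (k : α → β → ℝ) : Prop :=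
  ∀ a b, pushf q (fun c => (f c, g c)) (a, b) = pushf q f a * k a b

lemma IsKernel.comp [Fintype β] [Fintype δ] {k : α → β → ℝ} {k' : β → δ → ℝ} (hk : IsKernel k)
    (hk' : IsKernel k') : IsKernel fun a d => ∑ b, k a b * k' b d := by
  refine fun a => ⟨fun d => sum_nonneg fun b _ => mul_nonneg ((hk a).1 b) ((hk' b).1 d), ?_⟩
  rw [sum_comm]
  simp only [← mul_sum, (hk' _).2, mul_one, (hk a).2]

lemma exists_isCondLaw [Fintype β] [Nonempty β] (hq : ∀ c, 0 ≤ q c) (f : γ → α) (g : γ → β) :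
    ∃ k : α → β → ℝ, IsKernel k ∧ IsCondLaw q f g k := by
  classical
  set joint := pushf q fun c => (f c, g c)
  have h_joint : ∀ a b, 0 ≤ joint (a, b) := fun a b => pushf_nonneg hq _ _
  have h_sum : ∀ a, ∑ b, joint (a, b) = pushf q f a := sum_pushf_prodMk q f g
  refine ⟨fun a => if pushf q f a = 0 then Pi.single (Classical.arbitrary β) 1
    else fun b => joint (a, b) / pushf q f a, fun a => ?_, fun a b => ?_⟩
  · by_cases ha : pushf q f a = 0
    · simp only [ha, if_true]
      exact ⟨fun b => (Pi.single_nonneg.2 zero_le_one : (0 : β → ℝ) ≤ Pi.single _ 1) b,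
        by simp⟩
    · simp only [ha, if_false]
      exact ⟨fun b => div_nonneg (h_joint a b) (pushf_nonneg hq f a), by
        rw [← sum_div, h_sum, div_self ha]⟩
  · by_cases ha : pushf q f a = 0
    · have hb := (sum_eq_zero_iff_of_nonneg fun b _ => h_joint a b).1 ((h_sum a).trans ha) b
        (mem_univ b)
      simpa [ha] using hb
    · simp only [ha, if_false]
      exact (mul_div_cancel₀ _ ha).symm

namespace IsCondLaw

variable {f : γ → α} {g : γ → β} {k : α → β → ℝ}

lemma congr {f' : γ → α} {g' : γ → β} (h : IsCondLaw q f g k) (hf : ∀ c, q c ≠ 0 → f c = f' c)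
    (hg : ∀ c, q c ≠ 0 → g c = g' c) : IsCondLaw q f' g' k := by
  have hfg : pushf q (fun c => (f c, g c)) = pushf q fun c => (f' c, g' c) :=
    pushf_congr fun c hc => by rw [hf c hc, hg c hc]
  intro a b
  rw [← hfg, ← pushf_congr hf]
  exact h a b

lemma of_pushf [Fintype δ] {φ : γ → δ} {f : δ → α} {g : δ → β} (h : IsCondLaw (pushf q φ) f g k) :
    IsCondLaw q (fun c => f (φ c)) (fun c => g (φ c)) k := by
  simpa only [IsCondLaw, pushf_pushf] using h

lemma map_left [Finite α] {k : δ → β → ℝ} (φ : α → δ) (h : IsCondLaw q f g fun a => k (φ a)) :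
    IsCondLaw q (fun c => φ (f c)) g k := by
  classical
  cases nonempty_fintype α
  intro d b
  have h_fiber : pushf ((g ⁻¹' {b}).indicator q) f = fun a => pushf q f a * k (φ a) b :=
    funext fun a => (pushf_prodMk_eq_pushf_indicator_right q f g a b).symm.trans (h a b)
  rw [pushf_prodMk_eq_pushf_indicator_right, ← pushf_pushf _ f φ,
    ← pushf_pushf q f φ, h_fiber]
  simp only [pushf.eq_1 _ φ, sum_mul]
  refine sum_congr rfl fun a _ => ?_
  by_cases ha : φ a = d <;> simp [ha]

lemma drop_middle {ι : Type} [Finite α] [Finite δ] [Finite ι] {t : γ → ι} {f : γ → δ}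
    {x : γ → α} (h : IsCondLaw q (fun c => (x c, t c, f c)) g fun w => k w.1) :
    IsCondLaw q (fun c => (x c, f c)) g fun w => k w.1 :=
  h.map_left (k := fun w : α × δ => k w.1) (Prod.map id Prod.snd)

lemma map_right [Fintype β] (h : IsCondLaw q f g k) (φ : β → δ) :
    IsCondLaw q f (fun c => φ (g c)) fun a => pushf (k a) φ := by
  classical
  intro a d
  have h_fiber : pushf ((f ⁻¹' {a}).indicator q) g = fun b => pushf q f a * k a b :=
    funext fun b => (pushf_prodMk_eq_pushf_indicator_left q f g a b).symm.trans (h a b)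
  rw [pushf_prodMk_eq_pushf_indicator_left, ← pushf_pushf, h_fiber]
  simp only [pushf.eq_1 _ φ, mul_sum, mul_ite, mul_zero]

lemma comp [Fintype β] {g' : γ → δ} {k' : β → δ → ℝ} (h : IsCondLaw q f g k)
    (h' : IsCondLaw q (fun c => (g c, f c)) g' fun w => k' w.1) :
    IsCondLaw q f g' fun a d => ∑ b, k a b * k' b d := by
  classical
  intro a d
  rw [← sum_pushf_prodMk q (fun c => (f c, g' c)) g, mul_sum]
  refine sum_congr rfl fun b _ => ?_
  rw [← mul_assoc, ← h a b, ← pushf_prodMk_swap q f g]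
  refine Eq.trans ?_ (h' (b, a) d)
  simp only [pushf, Prod.mk.injEq, and_assoc, and_comm, and_left_comm]

lemma condH_eq_sum [Fintype α] [Fintype β] (h : IsCondLaw q f g k) (hk : IsKernel k) :
    condH q g f = ∑ a, pushf q f a * entropy (k a) := by
  simp only [condH, Hof_swap q f g]
  simp only [Hof, entropy_eq_sum_negMulLog_div_log_two, Fintype.sum_prod_type, h _ _,
    Real.negMulLog_mul, sum_add_distrib, ← sum_mul, ← mul_sum, (hk _).2, one_mul, ← mul_div_assoc,
    ← sum_div]
  ring

lemma condH_eq_of_entropy_eq [Fintype α] [Fintype β] (hq : IsPMF q) (h : IsCondLaw q f g k)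
    (hk : IsKernel k) {s : ℝ} (hs : ∀ a, entropy (k a) = s) : condH q g f = s := by
  simp only [h.condH_eq_sum hk, hs, ← sum_mul, sum_pushf, hq.2, one_mul]

variable {p : ℝ} [Fintype α] {f g : γ → α} {k : α → α → ℝ}

lemma pushf_eq_const (h : IsCondLaw q f g k) (hk : IsKernel k) (hk_symm : ∀ a b, k a b = k b a)
    (hf : ∀ a, pushf q f a = p) (a : α) : pushf q g a = p := by
  rw [← mul_one p, ← (hk a).2, mul_sum, ← sum_pushf_prodMk q g f]
  refine sum_congr rfl fun b _ => ?_
  rw [hk_symm, ← hf b, ← h b a, pushf_prodMk_swap]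

lemma symm (h : IsCondLaw q f g k) (hk : IsKernel k) (hk_symm : ∀ a b, k a b = k b a)
    (hf : ∀ a, pushf q f a = p) : IsCondLaw q g f k := by
  intro a b
  rw [h.pushf_eq_const hk hk_symm hf, hk_symm, ← hf b, ← h b a,
    pushf_prodMk_swap]

end IsCondLaw

lemma condH_nonneg [Fintype α] [Fintype β] [Nonempty α] (hq : ∀ c, 0 ≤ q c) (f : γ → α)
    (g : γ → β) : 0 ≤ condH q f g := by
  obtain ⟨k, hk, h⟩ := exists_isCondLaw hq g f
  rw [h.condH_eq_sum hk]
  exact sum_nonneg fun b _ => mul_nonneg (pushf_nonneg hq g b) (entropy_nonneg (hk b))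

lemma condH_le_condH_add_condH [Fintype α] [Fintype β] [Fintype δ] [Nonempty β]
    (hq : ∀ c, 0 ≤ q c) (f : γ → α) (g : γ → β) (h : γ → δ) :
    condH q f h ≤ condH q g h + condH q f fun c => (g c, h c) := by
  have := condH_nonneg hq g fun c => (f c, h c)
  rw [condH_prodMk_right q f g h]
  linarith

end ConditionalLaw

section BinaryErasureChannel

variable {γ α β δ : Type} [DecidableEq α] {p : ℝ}

/-- The erasure channel with input alphabet `α` and erasure probability `p`; the output `none` is
the erasure symbol. -/
def bec (p : ℝ) (a : α) : Option α → ℝ :=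
  fun b => if b = none then p else if b = some a then 1 - p else 0

variable [Fintype α]

lemma isKernel_bec (hp : p ∈ Set.Icc (0 : ℝ) 1) : IsKernel (bec p : α → Option α → ℝ) := by
  refine fun a => ⟨fun b => ?_, by simp [bec, Fintype.sum_option]⟩
  unfold bec
  split_ifs
  exacts [hp.1, sub_nonneg.2 hp.2, le_rfl]

lemma entropy_sum_mul_bec {r : α → ℝ} (hr : ∑ a, r a = 1) :
    entropy (fun b => ∑ a, r a * bec p a b) = h2 p + (1 - p) * entropy r := by
  simp only [entropy_eq_sum_negMulLog_div_log_two, h2_eq_binEntropy_div_log_two, bec,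
    Real.binEntropy_eq_negMulLog_add_negMulLog_one_sub, Fintype.sum_option, ← sum_mul, hr,
    Option.some_inj, reduceCtorEq, if_true, if_false, mul_ite, mul_zero, sum_ite_eq, mem_univ,
    Real.negMulLog_mul, sum_add_distrib, ← mul_sum, one_mul]
  ring

lemma entropy_bec (p : ℝ) (a : α) : entropy (bec p a) = h2 p := by
  have := entropy_sum_mul_bec (p := p) (r := Pi.single a 1) (by simp)
  simpa [Pi.single_apply, entropy_eq_sum_negMulLog_div_log_two, apply_ite] using this

variable [Fintype γ] [Fintype β] [Fintype δ] {q : γ → ℝ}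

lemma condH_prodMk_bec [Nonempty α] (hp : p ∈ Set.Icc (0 : ℝ) 1) (hq : IsPMF q) {a : γ → α}
    {f : γ → β} {b : γ → Option α} (hb : IsCondLaw q (fun c => (a c, f c)) b fun w => bec p w.1) :
    condH q a (fun c => (f c, b c)) = p * condH q a f := by
  obtain ⟨k, hk, ha⟩ := exists_isCondLaw hq.1 f a
  have hb_given_input : condH q b (fun c => (a c, f c)) = h2 p :=
    hb.condH_eq_of_entropy_eq hq (fun w => isKernel_bec hp w.1) fun w => entropy_bec p w.1
  have hb_blind : condH q b f = h2 p + (1 - p) * condH q a f := by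
    rw [(ha.comp hb).condH_eq_sum (hk.comp (isKernel_bec hp)), ha.condH_eq_sum hk]
    simp only [entropy_sum_mul_bec (hk _).2, mul_add, sum_add_distrib, ← sum_mul, sum_pushf, hq.2,
      one_mul, mul_left_comm _ (1 - p), ← mul_sum]
  rw [← condH_comp_right_of_injective Prod.swap_injective q a fun c => (f c, b c)]
  simp only [Prod.swap_prod_mk]
  rw [condH_prodMk_right, hb_given_input, hb_blind]
  ring

lemma condMutInf_prodMk_bec [Nonempty α] (hp : p ∈ Set.Icc (0 : ℝ) 1) (hq : IsPMF q) {a : γ → α}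
    {f : γ → β} {g : γ → δ} {b : γ → Option α}
    (hb : IsCondLaw q (fun c => (a c, f c, g c)) b fun w => bec p w.1) :
    condMutInf q f a (fun c => (g c, b c)) = p * condMutInf q f a g := by
  have hb_g : IsCondLaw q (fun c => (a c, g c)) b fun w => bec p w.1 :=
    hb.drop_middle
  have h_assoc : condH q a (fun c => (f c, g c, b c)) = condH q a fun c => ((f c, g c), b c) :=
    condH_comp_right_of_injective (Equiv.prodAssoc β δ (Option α)).injective q a
      fun c => ((f c, g c), b c)
  rw [condMutInf_comm, condMutInf_comm q f, condMutInf, condMutInf, h_assoc,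
    condH_prodMk_bec hp hq hb_g, condH_prodMk_bec hp hq hb, mul_sub]

lemma condMutInf_bec [Nonempty α] (hp : p ∈ Set.Icc (0 : ℝ) 1) (hq : IsPMF q) {a : γ → α}
    {f : γ → β} {b : γ → Option α} (hb : IsCondLaw q (fun c => (a c, f c)) b fun w => bec p w.1) :
    condMutInf q f a b = p * mutInf q f a := by
  have hb_input : IsCondLaw q (fun c => (a c, ())) b fun w => bec p w.1 :=
    hb.map_left (k := fun w : α × Unit => bec p w.1) (Prod.map id fun _ => ())
  have h_unit : condH q a b = condH q a fun c => ((), b c) :=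
    (condH_comp_right_of_injective (Prod.mk_right_injective ()) q a b).symm
  rw [condMutInf_comm, condMutInf, h_unit, condH_prodMk_bec hp hq hb_input,
    condH_prodMk_bec hp hq hb, condH_of_unique hq, mutInf_eq_Hof_sub_condH, mul_sub]

end BinaryErasureChannel

section BinarySymmetricChannel

variable {γ β : Type} {e : ℝ}

/-- The binary symmetric channel with crossover probability `e`. -/
def bsc (e : ℝ) (x : Bool) : Bool → ℝ := fun z => if z = x then 1 - e else e

lemma bsc_comm (e : ℝ) (x z : Bool) : bsc e x z = bsc e z x := by
  simp only [bsc, eq_comm]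

lemma isKernel_bsc (he : e ∈ Set.Icc (0 : ℝ) 1) : IsKernel (bsc e) := by
  refine fun x => ⟨fun z => ?_, by cases x <;> simp [bsc]⟩
  unfold bsc
  split_ifs <;> linarith [he.1, he.2]

lemma entropy_eq_h2 {r : Bool → ℝ} (hr : ∑ x, r x = 1) : entropy r = h2 (r true) := by
  have h_false : r false = 1 - r true := by rw [← hr, Fintype.sum_bool, add_sub_cancel_left]
  rw [entropy, Fintype.sum_bool, h_false, h2]
  ring

lemma entropy_bsc (e : ℝ) (x : Bool) : entropy (bsc e x) = h2 e := by
  rw [entropy_eq_h2 (by cases x <;> simp [bsc])]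
  cases x <;> simp [bsc]

lemma sum_mul_bsc_true {r : Bool → ℝ} (hr : ∑ x, r x = 1) (e : ℝ) :
    ∑ x, r x * bsc e x true = bstar e (r true) := by
  have h_false : r false = 1 - r true := by rw [← hr, Fintype.sum_bool, add_sub_cancel_left]
  simp only [bsc, bstar, Fintype.sum_bool, h_false, if_true, Bool.true_eq_false, if_false]
  ring

lemma sum_bsc_mul_bsc (u e : ℝ) (x z : Bool) :
    ∑ y, bsc u x y * bsc e y z = bsc (bstar e u) x z := by
  cases x <;> cases z <;> simp [bsc, bstar] <;> ring

variable [Fintype γ] [Fintype β] {q : γ → ℝ}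

lemma condH_eq_h2_of_bsc (hq : IsPMF q) (he : e ∈ Set.Icc (0 : ℝ) 1) {f : γ → β}
    {z : γ → Bool} {φ : β → Bool} (hz : IsCondLaw q f z fun b => bsc e (φ b)) :
    condH q z f = h2 e :=
  hz.condH_eq_of_entropy_eq hq (fun b => isKernel_bsc he (φ b)) fun b => entropy_bsc e (φ b)

lemma condH_prodMk_bsc (hq : IsPMF q) (he : e ∈ Set.Icc (0 : ℝ) 1) {a z : γ → Bool}
    {f : γ → β} (hz : IsCondLaw q (fun c => (a c, f c)) z fun w => bsc e w.1) :
    condH q a (fun c => (f c, z c)) = condH q a f + h2 e - condH q z f := by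
  rw [← condH_comp_right_of_injective Prod.swap_injective q a fun c => (f c, z c)]
  simp only [Prod.swap_prod_mk]
  rw [condH_prodMk_right, condH_eq_h2_of_bsc hq he hz]

lemma exists_h2_eq_condH_and_h2_bstar_le_condH (hq : IsPMF q) (a : γ → Bool) (f : γ → β) :
    ∃ u ∈ Set.Icc (0 : ℝ) (1 / 2), h2 u = condH q a f ∧
      ∀ e ∈ Set.Icc (0 : ℝ) (1 / 2), ∀ z : γ → Bool,
        IsCondLaw q (fun c => (a c, f c)) z (fun w => bsc e w.1) →
          h2 (bstar e u) ≤ condH q z f := by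
  obtain ⟨k, hk, ha⟩ := exists_isCondLaw hq.1 f a
  have ha_entropy : condH q a f = ∑ b, pushf q f b * h2 (k b true) := by
    rw [ha.condH_eq_sum hk]
    simp only [entropy_eq_h2 (hk _).2]
  have hp := hq.pushf f
  have h_le_one : condH q a f ≤ 1 := by
    rw [ha_entropy, ← hp.2]
    exact sum_le_sum fun b _ => mul_le_of_le_one_right (hp.1 b) (h2_le_one _)
  obtain ⟨u, hu, hu_eq⟩ : condH q a f ∈ h2 '' Set.Icc 0 (1 / 2) :=
    intermediate_value_Icc (by norm_num) continuous_h2.continuousOn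
      ⟨h2_zero.trans_le (condH_nonneg hq.1 a f), h_le_one.trans h2_half.ge⟩
  refine ⟨u, hu, hu_eq, fun e he z hz => ?_⟩
  have h_comp := hk.comp (isKernel_bsc ⟨he.1, by linarith [he.2]⟩)
  rw [(ha.comp hz).condH_eq_sum h_comp]
  simp only [entropy_eq_h2 (h_comp _).2, sum_mul_bsc_true (hk _).2]
  refine h2_bstar_le_sum_of_h2_eq_sum he hu hp.1 hp.2 (fun b => ⟨(hk b).1 true, ?_⟩)
    (hu_eq.trans ha_entropy)
  exact (hk b).2 ▸ single_le_sum (fun x _ => (hk b).1 x) (mem_univ true)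

lemma condH_cascade_bsc {u : ℝ} (hq : IsPMF q) (hu : u ∈ Set.Icc (0 : ℝ) 1)
    (he : e ∈ Set.Icc (0 : ℝ) 1) {x y z : γ → Bool} (hy : IsCondLaw q x y (bsc u))
    (hz : IsCondLaw q (fun c => (y c, x c)) z fun w => bsc e w.1) :
    condH q z x = h2 (bstar e u) := by
  refine (hy.comp hz).condH_eq_of_entropy_eq hq ((isKernel_bsc hu).comp (isKernel_bsc he)) ?_
  simp only [sum_bsc_mul_bsc, entropy_bsc, implies_true]

end BinarySymmetricChannel

section JointLaw

variable {γ α β : Type} [Fintype γ] [Fintype α] [Fintype β] {q : γ → ℝ}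

lemma isPMF_and_isCondLaw_of_eq_mul {f : γ → α} {g : γ → β} {r : α → ℝ} {k : α → β → ℝ}
    (hfg : Function.Bijective fun c => (f c, g c)) (hr : IsPMF r) (hk : IsKernel k)
    (h : ∀ c, q c = r (f c) * k (f c) (g c)) : IsPMF q ∧ pushf q f = r ∧ IsCondLaw q f g k := by
  have h_joint : ∀ a b, pushf q (fun c => (f c, g c)) (a, b) = r a * k a b := by
    intro a b
    obtain ⟨c, hc⟩ := hfg.2 (a, b)
    rw [← hc, pushf_apply_of_injective hfg.1, h c, (Prod.mk.inj hc).1, (Prod.mk.inj hc).2]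
  have h_marginal : pushf q f = r := by
    ext a
    simp only [← sum_pushf_prodMk q f g a, h_joint, ← mul_sum, (hk a).2, mul_one]
  refine ⟨⟨fun c => ?_, ?_⟩, h_marginal, fun a b => by rw [h_joint, h_marginal]⟩
  · rw [h]
    exact mul_nonneg (hr.1 _) ((hk _).1 _)
  · rw [← sum_pushf q f, h_marginal, hr.2]

end JointLaw

section ProdKernel

variable {γ α β δ ι : Type} [Fintype γ] {q : γ → ℝ}
  {k : α → β → ℝ} {k' : α → δ → ℝ}

/-- The channel which sends its input independently through `k` and through `k'`. -/
def prodKernel (k : α → β → ℝ) (k' : α → δ → ℝ) (a : α) : β × δ → ℝ :=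
  fun w => k a w.1 * k' a w.2

lemma isKernel_prodKernel [Fintype β] [Fintype δ] (hk : IsKernel k) (hk' : IsKernel k') :
    IsKernel (prodKernel k k') := by
  refine fun a => ⟨fun w => mul_nonneg ((hk a).1 _) ((hk' a).1 _), ?_⟩
  simp only [prodKernel, Fintype.sum_prod_type, ← mul_sum, (hk' a).2, mul_one, (hk a).2]

lemma pushf_prodKernel_fst [Fintype β] [Fintype δ] (hk' : IsKernel k') (a : α) :
    pushf (prodKernel k k' a) Prod.fst = k a := by
  classical
  ext b
  simp [pushf, prodKernel, Fintype.sum_prod_type_right, ← mul_sum, (hk' a).2]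

lemma pushf_prodKernel_snd [Fintype β] [Fintype δ] (hk : IsKernel k) (a : α) :
    pushf (prodKernel k k' a) Prod.snd = k' a := by
  classical
  ext d
  simp [pushf, prodKernel, Fintype.sum_prod_type, ← sum_mul, (hk a).2]

variable {f : γ → ι} {g : γ → β × δ} {φ : ι → α}

lemma IsCondLaw.fst [Finite β] [Fintype δ] (hk' : IsKernel k')
    (h : IsCondLaw q f g fun i => prodKernel k k' (φ i)) :
    IsCondLaw q f (fun c => (g c).1) fun i => k (φ i) := by
  cases nonempty_fintype β
  simpa only [pushf_prodKernel_fst hk'] using h.map_right Prod.fst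

lemma IsCondLaw.snd [Fintype β] [Finite δ] (hk : IsKernel k)
    (h : IsCondLaw q f g fun i => prodKernel k k' (φ i)) :
    IsCondLaw q f (fun c => (g c).2) fun i => k' (φ i) := by
  cases nonempty_fintype δ
  simpa only [pushf_prodKernel_snd hk] using h.map_right Prod.snd

end ProdKernel

section Chains

lemma sourceJointChain_laws {𝒰 𝒱 : Type} [Fintype 𝒰] [Fintype 𝒱] {pA : A → ℝ} {W : A → B × E → ℝ}
    {pU : 𝒱 → 𝒰 → ℝ} {pV : A → 𝒱 → ℝ} {q : 𝒰 × 𝒱 × A × B × E → ℝ}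
    (hq : q = sourceJointChain (fun w => pA w.1 * W w.1 w.2) pU pV)
    (hpA : IsPMF pA) (hW : IsKernel W) (hpU : IsKernel pU) (hpV : IsKernel pV) :
    IsPMF q ∧ pushf q (fun w => w.2.2.1) = pA ∧
      IsCondLaw q (fun w => w.2.2.1) (fun w => w.2.1) pV ∧
      IsCondLaw q (fun w => (w.2.1, w.2.2.1)) (fun w => w.1) (fun w => pU w.1) ∧
      IsCondLaw q (fun w => (w.1, w.2.1, w.2.2.1)) (fun w => w.2.2.2) fun w => W w.2.2 := by
  obtain ⟨h₁, h₁A, h₁V⟩ := isPMF_and_isCondLaw_of_eq_mul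
    (q := fun w : 𝒱 × A => pA w.2 * pV w.2 w.1) (f := Prod.snd) (g := Prod.fst)
    (Equiv.prodComm 𝒱 A).bijective hpA hpV fun _ => rfl
  obtain ⟨h₂, h₂VA, h₂U⟩ := isPMF_and_isCondLaw_of_eq_mul
    (q := fun w : 𝒰 × 𝒱 × A => pA w.2.2 * pV w.2.2 w.2.1 * pU w.2.1 w.1) (f := Prod.snd)
    (g := Prod.fst) (Equiv.prodComm 𝒰 (𝒱 × A)).bijective h₁ (fun w => hpU w.1) fun _ => rfl
  obtain ⟨h₃, h₃UVA, h₃W⟩ := isPMF_and_isCondLaw_of_eq_mul (q := q)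
    (f := fun w => (w.1, w.2.1, w.2.2.1)) (g := fun w => w.2.2.2)
    ⟨fun _ _ h => by simp_all [Prod.ext_iff], fun w => ⟨(w.1.1, w.1.2.1, w.1.2.2, w.2), rfl⟩⟩
    h₂ (fun w => hW w.2.2) fun w => by
      simp only [hq, sourceJointChain]
      ring
  rw [← h₃UVA] at h₂VA h₂U
  rw [← h₂VA] at h₁A h₁V
  rw [pushf_pushf, pushf_pushf] at h₁A
  exact ⟨h₃, h₁A, h₁V.of_pushf.of_pushf, h₂U.of_pushf, h₃W⟩

lemma chanJointQT_laws {𝒬 𝒯 : Type} [Fintype 𝒬] [Fintype 𝒯] {Wch : X → Y × Z → ℝ}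
    {pQ : 𝒬 → ℝ} {pT : 𝒬 → 𝒯 → ℝ} {pX : 𝒯 → X → ℝ} {q : 𝒬 × 𝒯 × X × Y × Z → ℝ}
    (hq : q = chanJointQT Wch pQ pT pX)
    (hW : IsKernel Wch) (hpQ : IsPMF pQ) (hpT : IsKernel pT) (hpX : IsKernel pX) :
    IsPMF q ∧ pushf q (fun w => w.1) = pQ ∧
      IsCondLaw q (fun w => w.1) (fun w => w.2.1) pT ∧
      IsCondLaw q (fun w => (w.1, w.2.1, w.2.2.1)) (fun w => w.2.2.2) fun w => Wch w.2.2 := by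
  obtain ⟨h₁, h₁Q, h₁T⟩ := isPMF_and_isCondLaw_of_eq_mul
    (q := fun w : 𝒬 × 𝒯 => pQ w.1 * pT w.1 w.2) (f := Prod.fst) (g := Prod.snd)
    Function.bijective_id hpQ hpT fun _ => rfl
  obtain ⟨h₂, h₂QT, -⟩ := isPMF_and_isCondLaw_of_eq_mul
    (q := fun w : 𝒬 × 𝒯 × X => pQ w.1 * pT w.1 w.2.1 * pX w.2.1 w.2.2)
    (f := fun w => (w.1, w.2.1)) (g := fun w => w.2.2)
    (Equiv.prodAssoc 𝒬 𝒯 X).symm.bijective h₁ (fun w => hpX w.2) fun _ => rfl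
  obtain ⟨h₃, h₃QTX, h₃W⟩ := isPMF_and_isCondLaw_of_eq_mul (q := q)
    (f := fun w => (w.1, w.2.1, w.2.2.1)) (g := fun w => w.2.2.2)
    ⟨fun _ _ h => by simp_all [Prod.ext_iff], fun w => ⟨(w.1.1, w.1.2.1, w.1.2.2, w.2), rfl⟩⟩
    h₂ (fun w => hW w.2.2) fun w => by simp only [hq, chanJointQT, Prod.mk.eta]
  rw [← h₃QTX] at h₂QT
  rw [← h₂QT] at h₁Q h₁T
  rw [pushf_pushf, pushf_pushf] at h₁Q
  exact ⟨h₃, h₁Q, h₁T.of_pushf.of_pushf, h₃W⟩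

end Chains

section BinarySetup

variable {γ δ ι : Type} [Fintype γ] [Fintype δ] [Fintype ι] {q : γ → ℝ}

lemma Hof_le_one (hq : IsPMF q) (y : γ → Bool) : Hof q y ≤ 1 := by
  rw [Hof, entropy_eq_h2 (hq.pushf y).2]
  exact h2_le_one _

lemma Hof_eq_one (hq : IsPMF q) {a : γ → Bool} (ha : ∀ x, pushf q a x = 1 / 2) : Hof q a = 1 := by
  rw [Hof, entropy_eq_h2 (hq.pushf a).2, ha, h2_half]

lemma condH_eq_zero_of_expVal_hamming_nonpos (hq : ∀ c, 0 ≤ q c) {a : γ → Bool} {f : γ → δ}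
    (φ : δ → Bool) (h : expVal q (fun c => hamming (a c) (φ (f c))) ≤ 0) : condH q a f = 0 := by
  have h_nonneg : ∀ c ∈ univ, 0 ≤ q c * hamming (a c) (φ (f c)) := fun c _ =>
    mul_nonneg (hq c) (by unfold hamming; split_ifs <;> norm_num)
  have h_terms := (sum_eq_zero_iff_of_nonneg h_nonneg).1 (h.antisymm (sum_nonneg h_nonneg))
  refine condH_eq_zero φ fun c hc => ?_
  simpa [hamming, hc] using h_terms c (mem_univ c)

lemma condH_eq_zero_of_expVal_hamming_bec_nonpos {p : ℝ} (hp : p ∈ Set.Ioc (0 : ℝ) 1)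
    (hq : IsPMF q) {a : γ → Bool} {f : γ → δ} {b : γ → Option Bool}
    (hb : IsCondLaw q (fun c => (a c, f c)) b fun w => bec p w.1) (φ : δ → Option Bool → Bool)
    (h : expVal q (fun c => hamming (a c) (φ (f c) (b c))) ≤ 0) : condH q a f = 0 := by
  have h_zero := condH_eq_zero_of_expVal_hamming_nonpos (f := fun c => (f c, b c)) hq.1
    (Function.uncurry φ) h
  rw [condH_prodMk_bec (Set.Ioc_subset_Icc_self hp) hq hb] at h_zero
  exact (mul_eq_zero.1 h_zero).resolve_left hp.1.ne'

lemma condMutInf_sub_condMutInf_bsc_le {e : ℝ} (hq : IsPMF q) (he : e ∈ Set.Icc (0 : ℝ) 1)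
    {t : γ → δ} {f : γ → ι} {y z : γ → Bool}
    (hz : IsCondLaw q (fun c => (y c, t c, f c)) z fun w => bsc e w.1) :
    condMutInf q t y f - condMutInf q t z f ≤ condH q y f - condH q z f + h2 e := by
  have h := condH_le_condH_add_condH hq.1 z y fun c => (t c, f c)
  rw [condH_eq_h2_of_bsc hq he hz] at h
  rw [condMutInf_comm, condMutInf_comm q t, condMutInf, condMutInf]
  linarith

lemma binSource_eq_mul_prodKernel (β ε : ℝ) :
    binSource β ε = fun w => 1 / 2 * prodKernel (bec β) (bsc ε) w.1 w.2 :=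
  funext fun _ => mul_assoc _ _ _

lemma wiretapII_eq_prodKernel (ζ : ℝ) : wiretapII ζ = prodKernel (bsc 0) (bsc ζ) := by
  ext x w
  simp only [wiretapII, prodKernel, bsc, sub_zero]

lemma eq_of_bsc_zero_ne_zero {x z : Bool} (h : bsc 0 x z ≠ 0) : z = x := by
  by_contra hzx
  simp [bsc, hzx] at h

lemma isPMF_half : IsPMF fun _ : Bool => (1 / 2 : ℝ) := ⟨fun _ => by norm_num, by simp⟩

variable {𝒰 𝒱 𝒬 𝒯 : Type} [Fintype 𝒰] [Fintype 𝒱] [Fintype 𝒬] [Fintype 𝒯] {β ε ζ : ℝ}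

lemma sourceJointChain_binSource_laws (hβ : β ∈ Set.Icc (0 : ℝ) 1)
    (hε : ε ∈ Set.Icc (0 : ℝ) 1) {pU : 𝒱 → 𝒰 → ℝ} {pV : Bool → 𝒱 → ℝ}
    {q : 𝒰 × 𝒱 × Bool × Option Bool × Bool → ℝ} (hq : q = sourceJointChain (binSource β ε) pU pV)
    (hpU : IsKernel pU) (hpV : IsKernel pV) :
    IsPMF q ∧ Hof q (fun w => w.2.2.1) = 1 ∧
      IsCondLaw q (fun w => (w.2.2.1, w.2.1, w.1)) (fun w => w.2.2.2.1) (fun w => bec β w.1) ∧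
      IsCondLaw q (fun w => (w.2.2.1, w.2.1, w.1)) (fun w => w.2.2.2.2) (fun w => bsc ε w.1) := by
  rw [binSource_eq_mul_prodKernel] at hq
  have hB : IsKernel (bec β : Bool → Option Bool → ℝ) := isKernel_bec hβ
  have hE := isKernel_bsc hε
  obtain ⟨h, hA, -, -, hBE⟩ := sourceJointChain_laws hq isPMF_half (isKernel_prodKernel hB hE)
    hpU hpV
  have hBE' : IsCondLaw q (fun w => (w.2.2.1, w.2.1, w.1)) (fun w => w.2.2.2)
      fun w => prodKernel (bec β) (bsc ε) w.1 :=
    hBE.map_left (k := fun w : Bool × 𝒱 × 𝒰 => prodKernel (bec β) (bsc ε) w.1)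
      fun w : 𝒰 × 𝒱 × Bool => (w.2.2, w.2.1, w.1)
  exact ⟨h, Hof_eq_one h fun x => congrFun hA x, hBE'.fst hE, hBE'.snd hB⟩

lemma chanJointQT_wiretapII_snd_eq {pQ : 𝒬 → ℝ} {pT : 𝒬 → 𝒯 → ℝ} {pX : 𝒯 → Bool → ℝ}
    {w : 𝒬 × 𝒯 × Bool × Bool × Bool} (hw : chanJointQT (wiretapII ζ) pQ pT pX w ≠ 0) :
    w.2.2.2.1 = w.2.2.1 := by
  rw [wiretapII_eq_prodKernel] at hw
  exact eq_of_bsc_zero_ne_zero (left_ne_zero_of_mul (right_ne_zero_of_mul hw))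

lemma chanJointQT_wiretapII_laws (hζ : ζ ∈ Set.Icc (0 : ℝ) 1) {pQ : 𝒬 → ℝ}
    {pT : 𝒬 → 𝒯 → ℝ} {pX : 𝒯 → Bool → ℝ} {q : 𝒬 × 𝒯 × Bool × Bool × Bool → ℝ}
    (hq : q = chanJointQT (wiretapII ζ) pQ pT pX)
    (hpQ : IsPMF pQ) (hpT : IsKernel pT) (hpX : IsKernel pX) :
    IsPMF q ∧
      IsCondLaw q (fun w => (w.2.2.2.1, w.2.1, w.1)) (fun w => w.2.2.2.2) fun w => bsc ζ w.1 := by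
  have hY : IsKernel (bsc 0) := isKernel_bsc (by norm_num)
  have hZ := isKernel_bsc hζ
  obtain ⟨h, -, -, hYZ⟩ := chanJointQT_laws (hq.trans (by rw [wiretapII_eq_prodKernel]))
    (isKernel_prodKernel hY hZ) hpQ hpT hpX
  have hZ_of_X : IsCondLaw q (fun w => (w.2.2.1, w.2.1, w.1)) (fun w => w.2.2.2.2)
      fun w => bsc ζ w.1 :=
    (hYZ.snd hY).map_left (k := fun w : Bool × 𝒯 × 𝒬 => bsc ζ w.1)
      fun w : 𝒬 × 𝒯 × Bool => (w.2.2, w.2.1, w.1)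
  refine ⟨h, hZ_of_X.congr (fun w hw => ?_) fun _ _ => rfl⟩
  rw [chanJointQT_wiretapII_snd_eq (hq ▸ hw)]

end BinarySetup

section Characterization

variable {β ε ζ Δ : ℝ}

lemma exists_le_of_digitalCond {𝒰 𝒱 𝒬 𝒯 : Type} [Fintype 𝒰] [Fintype 𝒱] [Fintype 𝒬] [Fintype 𝒯]
    (hβ : β ∈ Set.Ioc (0 : ℝ) 1) (hε : ε ∈ Set.Icc (0 : ℝ) (1 / 2))
    (hζ : ζ ∈ Set.Icc (0 : ℝ) (1 / 2))
    (h : DigitalCond 𝒰 𝒱 𝒬 𝒯 (binSource β ε) (wiretapII ζ) hamming 1 0 Δ) :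
    ∃ u q : ℝ, u ∈ Set.Icc (0 : ℝ) (1 / 2) ∧ q ∈ Set.Icc (0 : ℝ) (1 / 2) ∧
      β * (1 - h2 u) ≤ 1 - h2 q ∧
      Δ ≤ h2 ε + h2 u - h2 (bstar ε u)
        - max 0 (β * h2 u - (h2 ζ + h2 q - h2 (bstar ζ q))) := by
  obtain ⟨pU, pV, pQ, pT, pX, Ahat, hpU, hpV, hpQ, hpT, hpX, h_rate, -, h_dist, h_equiv⟩ := h
  have hβ' := Set.Ioc_subset_Icc_self hβ
  have h_half : Set.Icc (0 : ℝ) (1 / 2) ⊆ Set.Icc 0 1 := Set.Icc_subset_Icc_right (by norm_num)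
  have hε' := h_half hε
  have hζ' := h_half hζ
  obtain ⟨hs, hA, hB, hE⟩ := sourceJointChain_binSource_laws hβ' hε' rfl hpU hpV
  obtain ⟨hc, hZ⟩ := chanJointQT_wiretapII_laws hζ' rfl hpQ hpT hpX
  set s := sourceJointChain (binSource β ε) pU pV
  set c := chanJointQT (wiretapII ζ) pQ pT pX
  have hB_U : IsCondLaw s (fun w => (w.2.2.1, w.1)) (fun w => w.2.2.2.1) fun w => bec β w.1 :=
    hB.drop_middle
  have hE_U : IsCondLaw s (fun w => (w.2.2.1, w.1)) (fun w => w.2.2.2.2) fun w => bsc ε w.1 :=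
    hE.drop_middle
  have hZ_Q : IsCondLaw c (fun w => (w.2.2.2.1, w.1)) (fun w => w.2.2.2.2) fun w => bsc ζ w.1 :=
    hZ.drop_middle
  have h_lossless : condH s (fun w => w.2.2.1) (fun w => (w.2.1, w.1)) = 0 :=
    condH_eq_zero_of_expVal_hamming_bec_nonpos hβ hs hB (fun w => Ahat w.1) h_dist
  obtain ⟨u, hu, hu_eq, hu_le⟩ :=
    exists_h2_eq_condH_and_h2_bstar_le_condH hs (fun w => w.2.2.1) fun w => w.1
  obtain ⟨r, hr, hr_eq, hr_le⟩ :=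
    exists_h2_eq_condH_and_h2_bstar_le_condH hc (fun w => w.2.2.2.1) fun w => w.1
  have hE_ge := hu_le ε hε _ hE_U
  have hZ_ge := hr_le ζ hζ _ hZ_Q
  have h_leak := condMutInf_sub_condMutInf_bsc_le hc hζ' hZ
  rw [one_mul, condMutInf_bec hβ' hs hB_U, mutInf_eq_Hof_sub_condH, hA, ← hu_eq,
    mutInf_eq_Hof_sub_condH, ← hr_eq] at h_rate
  rw [one_mul, condH_prodMk_bsc hs hε' hE_U, condMutInf_prodMk_bec hβ' hs hB, condMutInf_comm s,
    condMutInf, h_lossless, sub_zero, ← hu_eq] at h_equiv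
  refine ⟨u, r, hu, hr, h_rate.trans (sub_le_sub_right (Hof_le_one hc _) _), h_equiv.trans ?_⟩
  refine sub_le_sub (by linarith) (max_le_max_left 0 ?_)
  linarith

lemma sourceJointChain_binSource_bsc_entropies {u : ℝ} (hβ : β ∈ Set.Icc (0 : ℝ) 1)
    (hε : ε ∈ Set.Icc (0 : ℝ) 1) (hu : u ∈ Set.Icc (0 : ℝ) 1)
    {s : Bool × Bool × Bool × Option Bool × Bool → ℝ}
    (hs : s = sourceJointChain (binSource β ε) (bsc u) (bsc 0)) :
    (∀ w, s w ≠ 0 → w.2.2.1 = w.2.1) ∧ condH s (fun w => w.2.2.1) (fun w => w.1) = h2 u ∧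
      condH s (fun w => w.2.2.2.2) (fun w => w.1) = h2 (bstar ε u) := by
  have h₀ : IsKernel (bsc 0) := isKernel_bsc (by norm_num)
  have hAV : ∀ w, s w ≠ 0 → w.2.2.1 = w.2.1 := fun w hw =>
    (eq_of_bsc_zero_ne_zero (right_ne_zero_of_mul (left_ne_zero_of_mul (hs ▸ hw)))).symm
  obtain ⟨h, -, -, hE⟩ := sourceJointChain_binSource_laws hβ hε hs (isKernel_bsc hu) h₀
  obtain ⟨-, hA, -, hU, -⟩ := sourceJointChain_laws (hs.trans (by rw [binSource_eq_mul_prodKernel]))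
    isPMF_half (isKernel_prodKernel (isKernel_bec hβ) (isKernel_bsc hε)) (isKernel_bsc hu) h₀
  have hU_of_A : IsCondLaw s (fun w => w.2.2.1) (fun w => w.1) (bsc u) :=
    (hU.map_left (k := bsc u) Prod.fst).congr (fun w hw => (hAV w hw).symm) fun _ _ => rfl
  have hA_of_U := hU_of_A.symm (isKernel_bsc hu) (bsc_comm u) fun x => congrFun hA x
  exact ⟨hAV, condH_eq_h2_of_bsc (φ := id) h hu hA_of_U,
    condH_cascade_bsc h hu hε hA_of_U hE.drop_middle⟩

lemma chanJointQT_wiretapII_bsc_entropies {r : ℝ} (hζ : ζ ∈ Set.Icc (0 : ℝ) 1)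
    (hr : r ∈ Set.Icc (0 : ℝ) 1) {c : Bool × Bool × Bool × Bool × Bool → ℝ}
    (hc : c = chanJointQT (wiretapII ζ) (fun _ => 1 / 2) (bsc r) (bsc 0)) :
    (∀ w, c w ≠ 0 → w.2.2.2.1 = w.2.1) ∧ Hof c (fun w => w.2.2.2.1) = 1 ∧
      condH c (fun w => w.2.2.2.1) (fun w => w.1) = h2 r ∧
      condH c (fun w => w.2.2.2.2) (fun w => w.1) = h2 (bstar ζ r) ∧
      condH c (fun w => w.2.2.2.2) (fun w => (w.2.1, w.1)) = h2 ζ := by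
  have h₀ : IsKernel (bsc 0) := isKernel_bsc (by norm_num)
  have hYT : ∀ w, c w ≠ 0 → w.2.2.2.1 = w.2.1 := fun w hw =>
    (chanJointQT_wiretapII_snd_eq (hc ▸ hw)).trans
      (eq_of_bsc_zero_ne_zero (right_ne_zero_of_mul (left_ne_zero_of_mul (hc ▸ hw))))
  obtain ⟨-, hQ, hT, -⟩ := chanJointQT_laws (hc.trans (by rw [wiretapII_eq_prodKernel]))
    (isKernel_prodKernel h₀ (isKernel_bsc hζ)) isPMF_half (isKernel_bsc hr) h₀
  obtain ⟨h, hZ⟩ := chanJointQT_wiretapII_laws hζ hc isPMF_half (isKernel_bsc hr) h₀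
  have hY_of_Q : IsCondLaw c (fun w => w.1) (fun w => w.2.2.2.1) (bsc r) :=
    hT.congr (fun _ _ => rfl) fun w hw => (hYT w hw).symm
  have hY : ∀ y, pushf c (fun w => w.2.2.2.1) y = 1 / 2 :=
    hY_of_Q.pushf_eq_const (isKernel_bsc hr) (bsc_comm r) fun x => congrFun hQ x
  have hZ_of_TTQ : IsCondLaw c (fun w => (w.2.1, w.2.1, w.1)) (fun w => w.2.2.2.2)
      fun w => bsc ζ w.1 :=
    hZ.congr (fun w hw => by rw [hYT w hw]) fun _ _ => rfl
  exact ⟨hYT, Hof_eq_one h hY, condH_eq_h2_of_bsc (φ := id) h hr hY_of_Q,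
    condH_cascade_bsc h hr hζ hY_of_Q hZ.drop_middle, condH_eq_h2_of_bsc h hζ hZ_of_TTQ.drop_middle⟩

lemma digitalCond_of_le {u r : ℝ} (hβ : β ∈ Set.Icc (0 : ℝ) 1)
    (hε : ε ∈ Set.Icc (0 : ℝ) 1) (hζ : ζ ∈ Set.Icc (0 : ℝ) 1)
    (hu : u ∈ Set.Icc (0 : ℝ) 1) (hr : r ∈ Set.Icc (0 : ℝ) 1)
    (h_rate : β * (1 - h2 u) ≤ 1 - h2 r)
    (hΔ : Δ ≤ h2 ε + h2 u - h2 (bstar ε u)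
      - max 0 (β * h2 u - (h2 ζ + h2 r - h2 (bstar ζ r)))) :
    DigitalCond Bool Bool Bool Bool (binSource β ε) (wiretapII ζ) hamming 1 0 Δ := by
  have h₀ : IsKernel (bsc 0) := isKernel_bsc (by norm_num)
  -- `V = A`, `U` is `A` seen through `bsc u`, `Q` is uniform and `X = T` is `Q` through `bsc r`.
  refine ⟨bsc u, bsc 0, fun _ => 1 / 2, bsc r, bsc 0, fun v _ => v, isKernel_bsc hu, h₀,
    isPMF_half, isKernel_bsc hr, h₀, ?_⟩
  obtain ⟨hs, hA, hB, hE⟩ := sourceJointChain_binSource_laws hβ hε rfl (isKernel_bsc hu) h₀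
  obtain ⟨hAV, hA_U, hE_U⟩ := sourceJointChain_binSource_bsc_entropies hβ hε hu rfl
  obtain ⟨hYT, hY, hY_Q, hZ_Q, hZ_TQ⟩ := chanJointQT_wiretapII_bsc_entropies hζ hr rfl
  set s := sourceJointChain (binSource β ε) (bsc u) (bsc 0)
  set c := chanJointQT (wiretapII ζ) (fun _ => 1 / 2) (bsc r) (bsc 0)
  have hB_V : IsCondLaw s (fun w => (w.2.2.1, w.2.1)) (fun w => w.2.2.2.1) fun w => bec β w.1 :=
    hB.map_left (k := fun w : Bool × Bool => bec β w.1) (Prod.map id Prod.fst)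
  have hA_VU : condH s (fun w => w.2.2.1) (fun w => (w.2.1, w.1)) = 0 := condH_eq_zero Prod.fst hAV
  have hY_TQ : condH c (fun w => w.2.2.2.1) (fun w => (w.2.1, w.1)) = 0 :=
    condH_eq_zero Prod.fst hYT
  refine ⟨?_, ?_, ?_, ?_⟩
  · rw [one_mul, condMutInf_bec hβ hs hB.drop_middle, mutInf_eq_Hof_sub_condH, hA, hA_U,
      mutInf_eq_Hof_sub_condH, hY, hY_Q]
    exact h_rate
  · rw [one_mul, condMutInf_bec hβ hs hB_V, mutInf_eq_Hof_sub_condH, hA, condH_eq_zero id hAV,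
      mutInf_eq_Hof_sub_condH, hY, condH_eq_zero id hYT, sub_zero, mul_one]
    exact hβ.2
  · refine (sum_eq_zero fun w _ => ?_).le
    by_cases hw : s w = 0
    · rw [hw, zero_mul]
    · simp [hamming, hAV w hw]
  · rw [one_mul, condH_prodMk_bsc hs hε hE.drop_middle, condMutInf_prodMk_bec hβ hs hB,
      condMutInf_comm s, condMutInf, hA_VU, hA_U, hE_U, condMutInf_comm c,
      condMutInf_comm c (fun w => w.2.1), condMutInf, condMutInf, hY_TQ, hY_Q,
      hZ_Q, hZ_TQ]
    convert hΔ using 3 <;> ring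

end Characterization

/-- **Proposition 4 (Binary characterization of the digital region).** In the binary
BEC/BSC setup over the type-II wiretap channel, `(k=1, D=0, Δ) ∈ ℛ_digital` if and only if
there exist `u, q ∈ [0,1/2]` such that `β(1 − h₂(u)) ≤ 1 − h₂(q)` and
`Δ ≤ h₂(ε) + h₂(u) − h₂(ε⋆u) − [ β·h₂(u) − (h₂(ζ) + h₂(q) − h₂(ζ⋆q)) ]₊`. -/
theorem binary_digital_characterization (β ε ζ Δ : ℝ)
    (hβ0 : 0 < β) (hβ1 : β ≤ 1)
    (hε0 : 0 ≤ ε) (hε1 : ε ≤ 1 / 2)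
    (hζ0 : 0 ≤ ζ) (hζ1 : ζ ≤ 1 / 2)
    (hΔ : 0 ≤ Δ) :
    (∃ (𝒰 𝒱 𝒬 𝒯 : Type) (i𝒰 : Fintype 𝒰) (i𝒱 : Fintype 𝒱)
      (i𝒬 : Fintype 𝒬) (i𝒯 : Fintype 𝒯),
      @DigitalCond Bool (Option Bool) Bool Bool Bool Bool _ _ _ _ _ _
        𝒰 𝒱 𝒬 𝒯 i𝒰 i𝒱 i𝒬 i𝒯 (binSource β ε) (wiretapII ζ) hamming 1 0 Δ) ↔
    (∃ u q : ℝ, u ∈ Set.Icc (0 : ℝ) (1 / 2) ∧ q ∈ Set.Icc (0 : ℝ) (1 / 2) ∧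
      β * (1 - h2 u) ≤ 1 - h2 q ∧
      Δ ≤ h2 ε + h2 u - h2 (bstar ε u)
        - max 0 (β * h2 u - (h2 ζ + h2 q - h2 (bstar ζ q)))) := by
  have h_half : Set.Icc (0 : ℝ) (1 / 2) ⊆ Set.Icc 0 1 := Set.Icc_subset_Icc_right (by norm_num)
  constructor
  · rintro ⟨𝒰, 𝒱, 𝒬, 𝒯, _, _, _, _, h⟩
    exact exists_le_of_digitalCond ⟨hβ0, hβ1⟩ ⟨hε0, hε1⟩ ⟨hζ0, hζ1⟩ h
  · rintro ⟨u, q, hu, hq, h_rate, h_equiv⟩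
    exact ⟨Bool, Bool, Bool, Bool, _, _, _, _,
      digitalCond_of_le ⟨hβ0.le, hβ1⟩ (h_half ⟨hε0, hε1⟩) (h_half ⟨hζ0, hζ1⟩) (h_half hu)
        (h_half hq) h_rate h_equiv⟩

end SecureSC
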